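/- Fix integers n ≥ 1 and k with 1 ≤ k ≤ n, let x̃ ∈ ℝⁿ be k-sparse nonnegative, σ > 0, g ∈ ℝᵐ and h ∈ ℝⁿ. Let Γ = {(ν, λ) : ν ≥ 0, λ ∈ ℝⁿ, 0 ≤ λ_i ≤ 2ν for all i} and define ξ_dual(σ, g, h, x̃) = inf_{d ≥ 0} sup_{(ν, λ) ∈ Γ} ( √(d² + σ²)·‖g‖₂ − d·‖h + ν·1 − λ‖₂ − Σ_{i=n−k+1}^{n} λ_i·x̃_i ). Assume there exists (ν̂, λ̂) ∈ Γ attaining the supremum defining ξ_ov(σ, g, h, x̃) and satisfying ‖h + ν̂·1 − λ̂‖₂ < ‖g‖₂. Then ξ_dual(σ, g, h, x̃) = ξ_ov(σ, g, h, x̃). -/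

import Mathlib

noncomputable def e2norm {d : ℕ} (x : Fin d → ℝ) : ℝ := Real.sqrt (∑ i, x i ^ 2)

def kSparseNonneg (n k : ℕ) (x : Fin n → ℝ) : Prop :=
  (∀ i : Fin n, (i : ℕ) < n - k → x i = 0) ∧ ∀ i, 0 ≤ x i

noncomputable def tailSum {n : ℕ} (k : ℕ) (lam x : Fin n → ℝ) : ℝ :=
  ∑ i ∈ Finset.univ.filter (fun i : Fin n => n - k ≤ (i : ℕ)), lam i * x i

/-- The constraint set of the "overwhelming" optimization ξ_ov. -/
def xiOvSet (m n k : ℕ) (σ : ℝ) (xt : Fin n → ℝ) (g : Fin m → ℝ) (h : Fin n → ℝ) :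
    Set ℝ :=
  {z : ℝ | ∃ ν : ℝ, ∃ lam : Fin n → ℝ, 0 ≤ ν ∧
    (∀ i, 0 ≤ lam i ∧ lam i ≤ 2 * ν) ∧
    e2norm (fun i => h i + ν - lam i) ≤ e2norm g ∧
    z = σ * Real.sqrt (e2norm g ^ 2 - e2norm (fun i => h i + ν - lam i) ^ 2)
        - tailSum k lam xt}

/-- The inner supremum over Γ in the definition of ξ_dual, as a function of d. -/
noncomputable def supAtD (m n k : ℕ) (σ : ℝ) (xt : Fin n → ℝ) (g : Fin m → ℝ)
    (h : Fin n → ℝ) (d : ℝ) : ℝ :=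
  sSup {z : ℝ | ∃ ν : ℝ, ∃ lam : Fin n → ℝ, 0 ≤ ν ∧
    (∀ i, 0 ≤ lam i ∧ lam i ≤ 2 * ν) ∧
    z = Real.sqrt (d ^ 2 + σ ^ 2) * e2norm g
        - d * e2norm (fun i => h i + ν - lam i) - tailSum k lam xt}

lemma e2norm_eq_norm {d : ℕ} (x : Fin d → ℝ) : e2norm x = ‖WithLp.toLp 2 x‖ := by
  simp [e2norm, EuclideanSpace.norm_eq]

lemma e2norm_nonneg {d : ℕ} (x : Fin d → ℝ) : 0 ≤ e2norm x := Real.sqrt_nonneg _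

lemma e2norm_comb {d : ℕ} (x y : Fin d → ℝ) (t : ℝ) (h0 : 0 ≤ t) (h1 : t ≤ 1) :
    e2norm (fun i => (1 - t) * x i + t * y i) ≤ (1 - t) * e2norm x + t * e2norm y := by
  have e : WithLp.toLp 2 (fun i => (1 - t) * x i + t * y i)
      = (1 - t) • WithLp.toLp 2 x + t • WithLp.toLp 2 y := by
    ext i; simp
  rw [e2norm_eq_norm, e2norm_eq_norm, e2norm_eq_norm, e]
  refine (norm_add_le _ _).trans ?_
  rw [norm_smul, norm_smul, Real.norm_of_nonneg h0, Real.norm_of_nonneg (by linarith)]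

lemma tailSum_comb {n : ℕ} (k : ℕ) (a b x : Fin n → ℝ) (t : ℝ) :
    tailSum k (fun i => (1 - t) * a i + t * b i) x
      = (1 - t) * tailSum k a x + t * tailSum k b x := by
  simp only [tailSum, Finset.mul_sum, ← Finset.sum_add_distrib]
  exact Finset.sum_congr rfl fun i _ => by ring

/-- Lower bound (Cauchy-Schwarz). -/
lemma cs_bound (σ d G N : ℝ) (hG : 0 ≤ G) (hNG : N < G) (hN : 0 ≤ N) :
    σ * Real.sqrt (G ^ 2 - N ^ 2) ≤ Real.sqrt (d ^ 2 + σ ^ 2) * G - d * N := by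
  have hs : Real.sqrt (G ^ 2 - N ^ 2) ^ 2 = G ^ 2 - N ^ 2 := Real.sq_sqrt (by nlinarith)
  have hG2 : G = Real.sqrt (G ^ 2) := (Real.sqrt_sq hG).symm
  set s := Real.sqrt (G ^ 2 - N ^ 2)
  have : σ * s + d * N ≤ Real.sqrt ((d ^ 2 + σ ^ 2) * G ^ 2) := by
    apply Real.le_sqrt_of_sq_le
    have : G ^ 2 = s ^ 2 + N ^ 2 := by linarith
    rw [this]
    nlinarith [sq_nonneg (d * s - σ * N)]
  rw [Real.sqrt_mul (by positivity), ← hG2] at this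
  linarith

/-- First-order optimality. -/
lemma first_order (σ G A B D : ℝ) (hA : 0 ≤ A) (hAG : A < G)
    (H : ∀ t : ℝ, 0 < t → t < 1 → A + t * (B - A) < G → 0 ≤ A + t * (B - A) →
      σ * (Real.sqrt (G ^ 2 - (A + t * (B - A)) ^ 2) - Real.sqrt (G ^ 2 - A ^ 2)) ≤ t * D)
    (hB : 0 ≤ B) :
    σ * A * (A - B) / Real.sqrt (G ^ 2 - A ^ 2) ≤ D := by
  have hpos : 0 < G ^ 2 - A ^ 2 := by nlinarith
  have hs : 0 < Real.sqrt (G ^ 2 - A ^ 2) := Real.sqrt_pos.2 hpos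
  have hs2 : Real.sqrt (G ^ 2 - A ^ 2) ^ 2 = G ^ 2 - A ^ 2 := Real.sq_sqrt hpos.le
  set s := Real.sqrt (G ^ 2 - A ^ 2) with hsdef
  let q : ℝ → ℝ := fun t => σ * ((A - B) * (2 * A + t * (B - A))) /
    (Real.sqrt (G ^ 2 - (A + t * (B - A)) ^ 2) + s)
  have hq : Continuous q := by
    refine Continuous.div (by fun_prop) (by fun_prop) fun t => ?_
    have := Real.sqrt_nonneg (G ^ 2 - (A + t * (B - A)) ^ 2)
    linarith
  have hq0 : q 0 = σ * A * (A - B) / s := by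
    simp only [q, zero_mul, add_zero, ← hsdef]
    field_simp
    ring
  rw [← hq0]
  have ht : Filter.Tendsto q (nhdsWithin 0 (Set.Ioi 0)) (nhds (q 0)) :=
    hq.continuousAt.tendsto.mono_left nhdsWithin_le_nhds
  refine le_of_tendsto ht ?_
  have e1 : ∀ᶠ t in nhdsWithin (0 : ℝ) (Set.Ioi 0), t < 1 :=
    nhdsWithin_le_nhds (eventually_lt_nhds (by norm_num))
  have e2 : ∀ᶠ t in nhdsWithin (0 : ℝ) (Set.Ioi 0), A + t * (B - A) < G := by
    apply nhdsWithin_le_nhds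
    have hc : Continuous fun t : ℝ => A + t * (B - A) := by fun_prop
    exact hc.continuousAt.eventually_lt continuousAt_const (by simpa using hAG)
  filter_upwards [e1, e2, self_mem_nhdsWithin] with t h1 h2 h0
  have h0 : 0 < t := h0
  have h3 : 0 ≤ A + t * (B - A) := by nlinarith
  have hh := H t h0 h1 h2 h3
  have hr0 := Real.sqrt_nonneg (G ^ 2 - (A + t * (B - A)) ^ 2)
  have hr2 : Real.sqrt (G ^ 2 - (A + t * (B - A)) ^ 2) ^ 2 = G ^ 2 - (A + t * (B - A)) ^ 2 :=
    Real.sq_sqrt (by nlinarith)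
  simp only [q]
  set r := Real.sqrt (G ^ 2 - (A + t * (B - A)) ^ 2)
  rw [div_le_iff₀ (by linarith)]
  have h5 : σ * (r - s) * (r + s) ≤ t * D * (r + s) :=
    mul_le_mul_of_nonneg_right hh (by linarith)
  have h6 : σ * (r - s) * (r + s) = t * (σ * ((A - B) * (2 * A + t * (B - A)))) := by
    have : σ * (r - s) * (r + s) = σ * (r ^ 2 - s ^ 2) := by ring
    rw [this, hr2, hs2]; ring
  rw [h6, mul_assoc] at h5
  exact le_of_mul_le_mul_left h5 h0

theorem lasso_stmt7 (m n k : ℕ) (hn : 1 ≤ n) (hk1 : 1 ≤ k) (hkn : k ≤ n)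
    (xt : Fin n → ℝ) (hxt : kSparseNonneg n k xt)
    (σ : ℝ) (hσ : 0 < σ) (g : Fin m → ℝ) (h : Fin n → ℝ)
    (hmax : ∃ νh : ℝ, ∃ lamh : Fin n → ℝ, 0 ≤ νh ∧
      (∀ i, 0 ≤ lamh i ∧ lamh i ≤ 2 * νh) ∧
      e2norm (fun i => h i + νh - lamh i) < e2norm g ∧
      IsGreatest (xiOvSet m n k σ xt g h)
        (σ * Real.sqrt (e2norm g ^ 2 - e2norm (fun i => h i + νh - lamh i) ^ 2)
          - tailSum k lamh xt)) :
    sInf ((supAtD m n k σ xt g h) '' {d : ℝ | 0 ≤ d})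
      = sSup (xiOvSet m n k σ xt g h) := by
  obtain ⟨νh, lamh, hν, hlam, hlt, hg⟩ := hmax
  rw [hg.csSup_eq]
  have hT : ∀ lam : Fin n → ℝ, (∀ i, 0 ≤ lam i) → 0 ≤ tailSum k lam xt := fun lam hl =>
    Finset.sum_nonneg fun i _ => mul_nonneg (hl i) (hxt.2 i)
  have hA : 0 ≤ e2norm (fun i => h i + νh - lamh i) := e2norm_nonneg _
  have hG : 0 ≤ e2norm g := e2norm_nonneg _
  have hlow : ∀ d : ℝ, 0 ≤ d →
      σ * Real.sqrt (e2norm g ^ 2 - e2norm (fun i => h i + νh - lamh i) ^ 2)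
          - tailSum k lamh xt ≤ supAtD m n k σ xt g h d := by
    intro d hd
    have hb := cs_bound σ d _ _ hG hlt hA
    refine le_trans (sub_le_sub_right hb _) ?_
    refine le_csSup ⟨Real.sqrt (d ^ 2 + σ ^ 2) * e2norm g, ?_⟩ ⟨νh, lamh, hν, hlam, rfl⟩
    rintro z ⟨ν, lam, _, hl, rfl⟩
    have h1 := hT lam fun i => (hl i).1
    have h2 := mul_nonneg hd (e2norm_nonneg fun i => h i + ν - lam i)
    linarith
  have hpos : 0 < e2norm g ^ 2 - e2norm (fun i => h i + νh - lamh i) ^ 2 := by nlinarith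
  apply le_antisymm
  · have hs := Real.sqrt_pos.2 hpos
    have hs2 := Real.sq_sqrt hpos.le
    have hd : 0 ≤ σ * e2norm (fun i => h i + νh - lamh i) /
      Real.sqrt (e2norm g ^ 2 - e2norm (fun i => h i + νh - lamh i) ^ 2) := by positivity
    refine le_trans (csInf_le ⟨?_, ?_⟩ ⟨_, hd, rfl⟩) ?_
    · exact σ * Real.sqrt (e2norm g ^ 2 - e2norm (fun i => h i + νh - lamh i) ^ 2)
          - tailSum k lamh xt
    · rintro z ⟨d, hd, rfl⟩
      exact hlow d hd
    · refine csSup_le ⟨_, νh, lamh, hν, hlam, rfl⟩ ?_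
      rintro z ⟨ν, lam, hν', hl, rfl⟩
      have key := first_order σ (e2norm g) (e2norm (fun i => h i + νh - lamh i))
        (e2norm (fun i => h i + ν - lam i)) (tailSum k lam xt - tailSum k lamh xt) hA hlt ?_
        (e2norm_nonneg _)
      · set G := e2norm g
        set A := e2norm (fun i => h i + νh - lamh i)
        set B := e2norm (fun i => h i + ν - lam i)
        set s := Real.sqrt (G ^ 2 - A ^ 2)
        have hsq : Real.sqrt ((σ * A / s) ^ 2 + σ ^ 2) = σ * G / s := by
          rw [Real.sqrt_eq_iff_eq_sq (by positivity) (by positivity)]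
          have : G ^ 2 = s ^ 2 + A ^ 2 := by linarith
          rw [div_pow, div_pow, mul_pow, mul_pow, this]
          field_simp
          ring
        rw [hsq]
        have : σ * G / s * G - σ * A / s * B = σ * s + σ * A * (A - B) / s := by
          have : G ^ 2 = s ^ 2 + A ^ 2 := by linarith
          field_simp
          linear_combination this
        linarith
      · intro t h0 h1 hM hM0
        have e : (fun i => h i + ((1 - t) * νh + t * ν) - ((1 - t) * lamh i + t * lam i))
            = fun i => (1 - t) * (h i + νh - lamh i) + t * (h i + ν - lam i) := by
          funext i; ring
        have hN := e2norm_comb (fun i => h i + νh - lamh i) (fun i => h i + ν - lam i) t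
          h0.le h1.le
        rw [← e] at hN
        have ht1 : 0 ≤ 1 - t := by linarith
        have hN0 := e2norm_nonneg
          (fun i => h i + ((1 - t) * νh + t * ν) - ((1 - t) * lamh i + t * lam i))
        have hmem := hg.2 (⟨(1 - t) * νh + t * ν, fun i => (1 - t) * lamh i + t * lam i,
          by positivity, fun i => ⟨?_, ?_⟩, ?_, rfl⟩ : _ ∈ xiOvSet m n k σ xt g h)
        · rw [tailSum_comb] at hmem
          have hmono : Real.sqrt (e2norm g ^ 2 - (e2norm (fun i => h i + νh - lamh i) +
              t * (e2norm (fun i => h i + ν - lam i) - e2norm (fun i => h i + νh - lamh i))) ^ 2)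
              ≤ Real.sqrt (e2norm g ^ 2 - e2norm
          (fun i => h i + ((1 - t) * νh + t * ν) - ((1 - t) * lamh i + t * lam i)) ^ 2) := by
            apply Real.sqrt_le_sqrt
            have := pow_le_pow_left₀ hN0 (hN.trans_eq (by ring :
              _ = e2norm (fun i => h i + νh - lamh i) + t * (e2norm (fun i => h i + ν - lam i)
                - e2norm (fun i => h i + νh - lamh i)))) 2
            linarith
          have := mul_le_mul_of_nonneg_left hmono hσ.le
          linarith
        · exact add_nonneg (mul_nonneg ht1 (hlam i).1) (mul_nonneg h0.le (hl i).1)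
        · have a1 := mul_le_mul_of_nonneg_left (hlam i).2 ht1
          have a2 := mul_le_mul_of_nonneg_left (hl i).2 h0.le
          linarith
        · linarith
  · refine le_csInf ⟨_, 0, le_refl (0 : ℝ), rfl⟩ ?_
    rintro z ⟨d, hd, rfl⟩
    exact hlow d hd
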